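/- arXiv:2605.17847 — 6 statements merged into one kernel-verified Lean document; each statement's English description precedes it below -/
import Mathlib

section
/- The diameter of the zero-divisor graph Γ(R) equals 2; that is, any two distinct vertices are at distance at most 2, and there exist two vertices at distance exactly 2. -/
/- `Rng p` models the ring `R = 𝔽_p[u,v]/⟨u², v², uv - vu⟩`:
every element is uniquely `a + b·u + c·v + d·uv` with `a b c d : ZMod p`. -/
set_option synthInstance.maxHeartbeats 1000000
set_option maxHeartbeats 1000000

abbrev Rng (p : ℕ) : Type := DualNumber (DualNumber (ZMod p))

/-- The element `u` of `R` (satisfies `u² = 0`). -/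
def uu (p : ℕ) : Rng p := TrivSqZeroExt.inl DualNumber.eps

/-- The element `v` of `R` (satisfies `v² = 0`). -/
def vv (p : ℕ) : Rng p := DualNumber.eps

/-- The vertex set `Z*(R)`: nonzero zero-divisors of `R`. -/
abbrev Vtx (p : ℕ) : Type := {x : Rng p // x ≠ 0 ∧ ∃ y : Rng p, y ≠ 0 ∧ x * y = 0}

/-- The zero-divisor graph `Γ(R)`. -/
def ZDG (p : ℕ) : SimpleGraph (Vtx p) where
  Adj a b := a ≠ b ∧ (a : Rng p) * (b : Rng p) = 0
  symm := ⟨fun a b h => ⟨h.1.symm, (mul_comm (b : Rng p) (a : Rng p)).trans h.2⟩⟩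
  loopless := ⟨fun a h => h.1 rfl⟩

instance (p : ℕ) : DecidableEq (Rng p) :=
  inferInstanceAs (DecidableEq ((ZMod p × ZMod p) × ZMod p × ZMod p))

instance (p : ℕ) [NeZero p] : Fintype (Rng p) :=
  inferInstanceAs (Fintype ((ZMod p × ZMod p) × ZMod p × ZMod p))

instance (p : ℕ) : DecidableRel (ZDG p).Adj :=
  fun a b => inferInstanceAs (Decidable (a ≠ b ∧ (a : Rng p) * (b : Rng p) = 0))

theorem ww_ne (p : ℕ) [Fact p.Prime] : uu p * vv p ≠ 0 := by
  intro h
  have h2 := congrArg (fun z : Rng p => z.snd.snd) h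
  simp [uu, vv] at h2

theorem vtx_fst (p : ℕ) [Fact p.Prime] (x : Vtx p) : x.1.fst.fst = 0 := by
  obtain ⟨x, hx, y, hy, hxy⟩ := x
  by_contra h
  have hu : IsUnit x := by
    rw [TrivSqZeroExt.isUnit_iff_isUnit_fst, TrivSqZeroExt.isUnit_iff_isUnit_fst]
    exact isUnit_iff_ne_zero.mpr h
  exact hy ((hu.mul_right_eq_zero).mp hxy)

theorem mul_ww (p : ℕ) [Fact p.Prime] (x : Rng p) (hx : x.fst.fst = 0) :
    x * (uu p * vv p) = 0 := by
  ext <;> simp [uu, vv, hx]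

def wV (p : ℕ) [Fact p.Prime] : Vtx p :=
  ⟨uu p * vv p, ww_ne p, uu p * vv p, ww_ne p, mul_ww p _ (by simp [uu, vv])⟩

theorem adj_w (p : ℕ) [Fact p.Prime] (x : Vtx p) (h : x ≠ wV p) : (ZDG p).Adj x (wV p) :=
  ⟨h, mul_ww p _ (vtx_fst p x)⟩

theorem walk_w (p : ℕ) [Fact p.Prime] (x : Vtx p) :
    ∃ q : (ZDG p).Walk x (wV p), q.length ≤ 1 := by
  by_cases h : x = wV p
  · subst h
    exact ⟨.nil, by simp⟩
  · exact ⟨.cons (adj_w p x h) .nil, by simp⟩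

theorem walk_two (p : ℕ) [Fact p.Prime] (x y : Vtx p) :
    ∃ q : (ZDG p).Walk x y, q.length ≤ 2 := by
  obtain ⟨q, hq⟩ := walk_w p x
  obtain ⟨r, hr⟩ := walk_w p y
  refine ⟨q.append r.reverse, ?_⟩
  rw [SimpleGraph.Walk.length_append, SimpleGraph.Walk.length_reverse]
  omega

theorem dist_two (p : ℕ) [Fact p.Prime] (x y : Vtx p) : (ZDG p).dist x y ≤ 2 := by
  obtain ⟨q, hq⟩ := walk_two p x y
  exact (SimpleGraph.dist_le q).trans hq

theorem vtx_mk (p : ℕ) [Fact p.Prime] (x : Rng p) (hx : x ≠ 0) (h : x.fst.fst = 0) :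
    x ≠ 0 ∧ ∃ y : Rng p, y ≠ 0 ∧ x * y = 0 :=
  ⟨hx, uu p * vv p, ww_ne p, mul_ww p x h⟩

theorem stmt4 (p : ℕ) [Fact p.Prime] (hodd : Odd p) :
    (∀ x y : Vtx p, x ≠ y → (ZDG p).dist x y ≤ 2) ∧
      (∃ x y : Vtx p, (ZDG p).dist x y = 2) := by
  refine ⟨fun x y _ => dist_two p x y, ?_⟩
  have hu : uu p ≠ 0 := fun h => ww_ne p (by rw [h, zero_mul])
  have hv : vv p ≠ 0 := fun h => ww_ne p (by rw [h, mul_zero])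
  refine ⟨⟨uu p, vtx_mk p _ hu (by simp [uu])⟩, ⟨vv p, vtx_mk p _ hv (by simp [vv])⟩, ?_⟩
  set x : Vtx p := ⟨uu p, vtx_mk p _ hu (by simp [uu])⟩ with hx
  set y : Vtx p := ⟨vv p, vtx_mk p _ hv (by simp [vv])⟩ with hy
  have h2 := dist_two p x y
  have h1 : (ZDG p).dist x y ≠ 1 := by
    rw [Ne, SimpleGraph.dist_eq_one_iff_adj]
    exact fun h => ww_ne p h.2
  have h0 : (ZDG p).dist x y ≠ 0 := by
    obtain ⟨q, -⟩ := walk_two p x y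
    rw [Ne, q.reachable.dist_eq_zero_iff]
    intro h
    have h3 : uu p = vv p := congrArg Subtype.val h
    have h4 := congrArg (fun z : Rng p => z.fst.snd) h3
    simp [uu, vv] at h4
  omega
end

section
/- The set A_u ∪ A_uv = {x·u : x ∈ 𝔽_p*} ∪ {x·uv : x ∈ 𝔽_p*} induces a complete subgraph of Γ(R) on 2p − 2 vertices; consequently the clique number of Γ(R) is at least 2p − 2. -/
/- `Rng p` models the ring `R = 𝔽_p[u,v]/⟨u², v², uv - vu⟩`:
every element is uniquely `a + b·u + c·v + d·uv` with `a b c d : ZMod p`. -/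
set_option synthInstance.maxHeartbeats 1000000
set_option maxHeartbeats 1000000

theorem uu_eq (p : ℕ) (x : ZMod p) : x • uu p = ((((0 : ZMod p), x), ((0 : ZMod p), (0 : ZMod p))) : (ZMod p × ZMod p) × ZMod p × ZMod p) := by
  refine Prod.ext (Prod.ext ?_ ?_) (Prod.ext ?_ ?_)
  · change x * 0 = 0; simp
  · change x * 1 = x; simp
  · change x * 0 = 0; simp
  · change x * 0 = 0; simp

theorem uv_eq (p : ℕ) (x : ZMod p) : x • (uu p * vv p) = ((((0 : ZMod p), (0 : ZMod p)), ((0 : ZMod p), x)) : (ZMod p × ZMod p) × ZMod p × ZMod p) := by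
  have e : uu p * vv p = TrivSqZeroExt.inr (DualNumber.eps : DualNumber (ZMod p)) := by
    ext <;> simp [uu, vv]
  rw [e]
  refine Prod.ext (Prod.ext ?_ ?_) (Prod.ext ?_ ?_)
  · change x * 0 = 0; simp
  · change x * 0 = 0; simp
  · change x * 0 = 0; simp
  · change x * 1 = x; simp

theorem uu_sq (p : ℕ) : uu p * uu p = 0 := by
  ext <;> simp [uu]

/-- Any two elements of the set multiply to zero. -/
theorem mul_zero_of (p : ℕ) (a b : Rng p) (x y : ZMod p)
    (ha : a = x • uu p ∨ a = x • (uu p * vv p))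
    (hb : b = y • uu p ∨ b = y • (uu p * vv p)) : a * b = 0 := by
  have h1 : ∃ c, a = uu p * c := by
    rcases ha with h | h
    · exact ⟨x • 1, by rw [h, mul_smul_comm, mul_one]⟩
    · exact ⟨x • vv p, by rw [h, mul_smul_comm]⟩
  have h2 : ∃ c, b = uu p * c := by
    rcases hb with h | h
    · exact ⟨y • 1, by rw [h, mul_smul_comm, mul_one]⟩
    · exact ⟨y • vv p, by rw [h, mul_smul_comm]⟩
  obtain ⟨c, rfl⟩ := h1
  obtain ⟨d, rfl⟩ := h2
  refine (mul_mul_mul_comm (uu p) c (uu p) d).trans ?_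
  exact (congrArg (· * (c * d)) (uu_sq p)).trans (zero_mul (c * d))

theorem uu_ne (p : ℕ) (x : ZMod p) (hx : x ≠ 0) : x • uu p ≠ 0 := by
  intro h
  exact hx (congrArg (fun z : (ZMod p × ZMod p) × ZMod p × ZMod p => z.1.2) ((uu_eq p x).symm.trans h))

theorem uv_ne (p : ℕ) (x : ZMod p) (hx : x ≠ 0) : x • (uu p * vv p) ≠ 0 := by
  intro h
  exact hx (congrArg (fun z : (ZMod p × ZMod p) × ZMod p × ZMod p => z.2.2) ((uv_eq p x).symm.trans h))

/-- Parametrization of the set. -/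
def par (p : ℕ) [Fact p.Prime] : (ZMod p)ˣ ⊕ (ZMod p)ˣ → Vtx p
  | .inl x => ⟨(x : ZMod p) • uu p, uu_ne p _ x.ne_zero, (x : ZMod p) • uu p, uu_ne p _ x.ne_zero,
      mul_zero_of p _ _ x x (Or.inl rfl) (Or.inl rfl)⟩
  | .inr x => ⟨(x : ZMod p) • (uu p * vv p), uv_ne p _ x.ne_zero, (x : ZMod p) • (uu p * vv p),
      uv_ne p _ x.ne_zero, mul_zero_of p _ _ x x (Or.inr rfl) (Or.inr rfl)⟩

theorem par_inj (p : ℕ) [Fact p.Prime] : Function.Injective (par p) := by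
  rintro (x | x) (y | y) h
  · have h' := (uu_eq p x).symm.trans ((congrArg Subtype.val h).trans (uu_eq p y))
    exact congrArg _ (Units.ext (congrArg (fun z => z.1.2) h'))
  · have h' := (uu_eq p x).symm.trans ((congrArg Subtype.val h).trans (uv_eq p y))
    exact absurd (congrArg (fun z => z.1.2) h') x.ne_zero
  · have h' := (uv_eq p x).symm.trans ((congrArg Subtype.val h).trans (uu_eq p y))
    exact absurd (congrArg (fun z => z.2.2) h') x.ne_zero
  · have h' := (uv_eq p x).symm.trans ((congrArg Subtype.val h).trans (uv_eq p y))
    exact congrArg _ (Units.ext (congrArg (fun z => z.2.2) h'))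

theorem par_range (p : ℕ) [Fact p.Prime] : {a : Vtx p | ∃ x : ZMod p, x ≠ 0 ∧
        ((a : Rng p) = x • uu p ∨ (a : Rng p) = x • (uu p * vv p))} = Set.range (par p) := by
  ext a
  constructor
  · rintro ⟨x, hx, h | h⟩
    · exact ⟨.inl (Units.mk0 x hx), Subtype.ext h.symm⟩
    · exact ⟨.inr (Units.mk0 x hx), Subtype.ext h.symm⟩
  · rintro ⟨x | x, rfl⟩
    · exact ⟨x, x.ne_zero, Or.inl rfl⟩
    · exact ⟨x, x.ne_zero, Or.inr rfl⟩

theorem stmt9 (p : ℕ) [Fact p.Prime] (hodd : Odd p) :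
    (ZDG p).IsClique {a : Vtx p | ∃ x : ZMod p, x ≠ 0 ∧
        ((a : Rng p) = x • uu p ∨ (a : Rng p) = x • (uu p * vv p))} ∧
      {a : Vtx p | ∃ x : ZMod p, x ≠ 0 ∧
        ((a : Rng p) = x • uu p ∨ (a : Rng p) = x • (uu p * vv p))}.ncard = 2 * p - 2 ∧
      2 * p - 2 ≤ (ZDG p).cliqueNum := by
  have hcl : (ZDG p).IsClique {a : Vtx p | ∃ x : ZMod p, x ≠ 0 ∧
        ((a : Rng p) = x • uu p ∨ (a : Rng p) = x • (uu p * vv p))} := by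
    rintro a ⟨x, hx, ha⟩ b ⟨y, hy, hb⟩ hab
    exact ⟨hab, mul_zero_of p _ _ x y ha hb⟩
  have hcard : {a : Vtx p | ∃ x : ZMod p, x ≠ 0 ∧
        ((a : Rng p) = x • uu p ∨ (a : Rng p) = x • (uu p * vv p))}.ncard = 2 * p - 2 := by
    rw [par_range, ← Set.image_univ, Set.ncard_image_of_injective _ (par_inj p), Set.ncard_univ,
      Nat.card_eq_fintype_card, Fintype.card_sum, ZMod.card_units]
    omega
  refine ⟨hcl, hcard, ?_⟩
  rw [← hcard, Set.ncard_eq_toFinset_card _ (Set.toFinite _)]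
  exact SimpleGraph.IsClique.card_le_cliqueNum (tc := by simpa only [Set.Finite.coe_toFinset] using hcl)
end

section
/- The chromatic number of Γ(R) is at least 2p − 2. -/
/- `Rng p` models the ring `R = 𝔽_p[u,v]/⟨u², v², uv - vu⟩`:
every element is uniquely `a + b·u + c·v + d·uv` with `a b c d : ZMod p`. -/
set_option synthInstance.maxHeartbeats 1000000
set_option maxHeartbeats 1000000

theorem stmt10 (p : ℕ) [Fact p.Prime] (hodd : Odd p) :
    ((2 * p - 2 : ℕ) : ℕ∞) ≤ (ZDG p).chromaticNumber := by
  haveI : NeZero p := ⟨(Fact.out : p.Prime).ne_zero⟩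
  let T := {x : ZMod p × ZMod p // x ≠ 0}
  let g : ZMod p × ZMod p → Rng p := fun x => TrivSqZeroExt.inr (show DualNumber (ZMod p) from x)
  have g_inj : Function.Injective g := fun a b h => TrivSqZeroExt.inr_injective h
  have g_ne : ∀ x, x ≠ 0 → g x ≠ 0 := fun x hx h => hx (g_inj h)
  have g_mul : ∀ x y, g x * g y = 0 := fun x y => TrivSqZeroExt.inr_mul_inr _ _ _
  let f : T → Vtx p := fun x => ⟨g x.1, g_ne _ x.2, g x.1, g_ne _ x.2, g_mul _ _⟩
  have f_inj : Function.Injective f := fun a b h =>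
    Subtype.ext (g_inj (congrArg Subtype.val h))
  have hcard : Fintype.card T = p * p - 1 := by
    have h := Fintype.card_subtype_compl (fun x : ZMod p × ZMod p => x = 0)
    rw [Fintype.card_prod, ZMod.card, Fintype.card_subtype_eq] at h
    exact (Fintype.card_congr (Equiv.refl _)).trans h
  have hp : 2 * p - 2 ≤ p * p - 1 := by
    have := (Fact.out : p.Prime).two_le
    have : 2 * p ≤ p * p := Nat.mul_le_mul_right _ this
    omega
  refine le_iInf₂ fun n hn => ?_
  obtain ⟨c⟩ := hn
  have hc : Function.Injective (fun t : T => c (f t)) := by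
    intro a b h
    by_contra hab
    exact c.valid (show (ZDG p).Adj (f a) (f b) from
      ⟨fun e => hab (f_inj e), g_mul _ _⟩) h
  have := Fintype.card_le_of_injective _ hc
  rw [hcard, Fintype.card_fin] at this
  exact_mod_cast hp.trans this
end

section
/- Every vertex cut of Γ(R) contains the entire set A_uv = {x·uv : x ∈ 𝔽_p*}; in particular, every set S of vertices such that deleting S disconnects Γ(R) has cardinality at least p − 1. -/
/- `Rng p` models the ring `R = 𝔽_p[u,v]/⟨u², v², uv - vu⟩`:
every element is uniquely `a + b·u + c·v + d·uv` with `a b c d : ZMod p`. -/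
set_option synthInstance.maxHeartbeats 1000000
set_option maxHeartbeats 1000000

theorem fst_fst_zero (p : ℕ) [Fact p.Prime] (b : Vtx p) : b.1.fst.fst = 0 := by
  obtain ⟨b, hb, y, hy, hby⟩ := b
  by_contra h
  have hu : IsUnit b := by
    rw [TrivSqZeroExt.isUnit_iff_isUnit_fst, TrivSqZeroExt.isUnit_iff_isUnit_fst]
    exact isUnit_iff_ne_zero.mpr h
  exact hy ((hu.mul_right_eq_zero).mp hby)

theorem mul_uv (p : ℕ) (b : Rng p) (h : b.fst.fst = 0) (x : ZMod p) :
    b * (x • (uu p * vv p)) = 0 := by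
  ext <;> simp [uu, vv, h]

theorem smul_uv_coord (p : ℕ) (x : ZMod p) : (x • (uu p * vv p)).snd.snd = x := by
  simp [uu, vv]

theorem stmt11 (p : ℕ) [Fact p.Prime] (hodd : Odd p) (S : Set (Vtx p))
    (hS : ¬ ((ZDG p).induce Sᶜ).Connected) :
    (∀ a : Vtx p, (∃ x : ZMod p, x ≠ 0 ∧ (a : Rng p) = x • (uu p * vv p)) → a ∈ S) ∧
      p - 1 ≤ S.ncard := by
  have h1 : ∀ a : Vtx p, (∃ x : ZMod p, x ≠ 0 ∧ (a : Rng p) = x • (uu p * vv p)) → a ∈ S := by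
    rintro a ⟨x, hx, ha⟩
    by_contra haS
    apply hS
    have key : ∀ b : (Sᶜ : Set (Vtx p)),
        ((ZDG p).induce Sᶜ).Reachable ⟨a, haS⟩ b := by
      intro b
      by_cases hab : (⟨a, haS⟩ : (Sᶜ : Set (Vtx p))) = b
      · rw [hab]
      · apply SimpleGraph.Adj.reachable
        refine ⟨fun h => hab (Subtype.ext h), ?_⟩
        change (a : Rng p) * (b.1 : Rng p) = 0
        refine (mul_comm (a : Rng p) (b.1 : Rng p)).trans ?_
        rw [ha]
        exact mul_uv p _ (fst_fst_zero p b.1) x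
    haveI : Nonempty (Sᶜ : Set (Vtx p)) := ⟨⟨a, haS⟩⟩
    exact ⟨fun b c => (key b).symm.trans (key c)⟩
  refine ⟨h1, ?_⟩
  have hne : ∀ x : ZMod p, x ≠ 0 → x • (uu p * vv p) ≠ 0 := by
    intro x hx h
    have := smul_uv_coord p x
    rw [h] at this
    exact hx this.symm
  let f : {x : ZMod p // x ≠ 0} → Vtx p := fun x =>
    ⟨x.1 • (uu p * vv p), hne x.1 x.2, x.1 • (uu p * vv p), hne x.1 x.2,
      mul_uv p _ (by simp [uu, vv]) x.1⟩
  have hf : Function.Injective f := by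
    intro x y h
    have h2 : x.1 • (uu p * vv p) = y.1 • (uu p * vv p) := congrArg Subtype.val h
    apply Subtype.ext
    rw [← smul_uv_coord p x.1, h2, smul_uv_coord]
  have hsub : Set.range f ⊆ S := by
    rintro _ ⟨x, rfl⟩
    exact h1 _ ⟨x.1, x.2, rfl⟩
  haveI : Finite (Vtx p) := inferInstance
  have hle := Set.ncard_le_ncard hsub (Set.toFinite S)
  have hcard : (Set.range f).ncard = p - 1 := by
    rw [← Set.image_univ, Set.ncard_image_of_injective _ hf, Set.ncard_univ,
      Nat.card_eq_fintype_card, Fintype.card_subtype_compl, ZMod.card]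
    simp
  omega
end

section
/- 0 is an eigenvalue of the adjacency matrix of Γ(R) (over ℝ) with multiplicity at least p² − p − 1. -/
/- `Rng p` models the ring `R = 𝔽_p[u,v]/⟨u², v², uv - vu⟩`:
every element is uniquely `a + b·u + c·v + d·uv` with `a b c d : ZMod p`. -/
set_option synthInstance.maxHeartbeats 1000000
set_option maxHeartbeats 1000000

/-- The adjacency matrix of `Γ(R)` over `ℝ`. -/
def adjMat (p : ℕ) : Matrix (Vtx p) (Vtx p) ℝ :=
  fun a b => if (ZDG p).Adj a b then 1 else 0

/-- The element `a + b u + c v + d uv`. -/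
def mkFour (p : ℕ) (a b c d : ZMod p) : Rng p := ((a, b), (c, d))

/-- The element `t(u+v) + d uv`. -/
def elt (p : ℕ) (t d : ZMod p) : Rng p := mkFour p 0 t t d

theorem elt_mul_iff (p : ℕ) [Fact p.Prime] (x : Rng p) (t d : ZMod p) (ht : t ≠ 0) :
    x * elt p t d = 0 ↔ x.fst.fst = 0 ∧ x.fst.snd + x.snd.fst = 0 := by
  obtain ⟨a, b, c, e, rfl⟩ : ∃ a b c e, x = mkFour p a b c e :=
    ⟨x.fst.fst, x.fst.snd, x.snd.fst, x.snd.snd, rfl⟩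
  have key : mkFour p a b c e * elt p t d
      = mkFour p 0 (a * t) (a * t) (a * d + b * t + c * t) := by
    refine Prod.ext (Prod.ext ?_ ?_) (Prod.ext ?_ ?_)
    · change a * 0 = 0
      ring
    · change a * t + b * 0 = a * t
      ring
    · change a * t + c * 0 = a * t
      ring
    · change (a * d + b * t) + (c * t + e * 0) = a * d + b * t + c * t
      ring
  change mkFour p a b c e * elt p t d = 0 ↔ a = 0 ∧ b + c = 0
  rw [key]
  constructor
  · intro h
    have h1 : a * t = 0 := congrArg (fun z : Rng p => z.fst.snd) h
    have h2 : a * d + b * t + c * t = 0 := congrArg (fun z : Rng p => z.snd.snd) h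
    have ha : a = 0 := by simpa [ht] using h1
    subst ha
    refine ⟨rfl, ?_⟩
    have : (b + c) * t = 0 := by linear_combination h2
    simpa [ht] using this
  · rintro ⟨rfl, h⟩
    have h2 : (0 : ZMod p) * d + b * t + c * t = 0 := by linear_combination t * h
    rw [h2, zero_mul]
    rfl

theorem elt_ne_zero (p : ℕ) (t d : ZMod p) (ht : t ≠ 0) : elt p t d ≠ 0 := fun h =>
  ht (congrArg (fun z : Rng p => z.fst.snd) h)

/-- The embedding of the twin class. -/
def emb (p : ℕ) [Fact p.Prime] (s : {t : ZMod p // t ≠ 0} × ZMod p) : Vtx p :=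
  ⟨elt p s.1 s.2, elt_ne_zero p _ _ s.1.2, mkFour p 0 1 (-1) 0, by
    intro h
    exact one_ne_zero (congrArg (fun z : Rng p => z.fst.snd) h), by
    exact (mul_comm (elt p s.1 s.2) (mkFour p 0 1 (-1) 0)).trans
      ((elt_mul_iff _ _ _ _ s.1.2).2 ⟨rfl, add_neg_cancel (1 : ZMod p)⟩)⟩

theorem emb_inj (p : ℕ) [Fact p.Prime] : Function.Injective (emb p) := by
  rintro ⟨⟨t, ht⟩, d⟩ ⟨⟨t', ht'⟩, d'⟩ h
  have h0 : elt p t d = elt p t' d' := congrArg Subtype.val h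
  have h1 : t = t' := congrArg (fun z : Rng p => z.fst.snd) h0
  have h2 : d = d' := congrArg (fun z : Rng p => z.snd.snd) h0
  subst h1 h2
  rfl

theorem adj_emb (p : ℕ) [Fact p.Prime] (hodd : Odd p) (a : Vtx p)
    (s : {t : ZMod p // t ≠ 0} × ZMod p) :
    (ZDG p).Adj a (emb p s) ↔ a.1.fst.fst = 0 ∧ a.1.fst.snd + a.1.snd.fst = 0 := by
  change (a ≠ emb p s ∧ (a : Rng p) * elt p s.1 s.2 = 0) ↔ _
  rw [elt_mul_iff _ _ _ _ s.1.2]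
  refine and_iff_right_of_imp ?_
  rintro ⟨-, h⟩ rfl
  have h' : (s.1 : ZMod p) + s.1 = 0 := h
  have h2 : (2 : ZMod p) * s.1 = 0 := by rw [two_mul]; exact h'
  rcases mul_eq_zero.1 h2 with h3 | h3
  · have : ((2 : ℕ) : ZMod p) = 0 := by exact_mod_cast h3
    rw [ZMod.natCast_eq_zero_iff] at this
    have := (Nat.prime_dvd_prime_iff_eq (Fact.out : p.Prime) Nat.prime_two).1 this
    subst this
    exact absurd hodd (by decide)
  · exact s.1.2 h3

theorem stmt13 (p : ℕ) [Fact p.Prime] (hodd : Odd p) :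
    p ^ 2 - p - 1 ≤ Module.finrank ℝ
      (Module.End.eigenspace (Matrix.toLin' (adjMat p)) (0 : ℝ)) := by
  let S := {t : ZMod p // t ≠ 0} × ZMod p
  let L : (S → ℝ) →ₗ[ℝ] ℝ := ∑ s : S, LinearMap.proj s
  have hL : ∀ g, L g = ∑ s, g s := fun g => by simp [L]
  have hcard : Module.finrank ℝ (S → ℝ) = p ^ 2 - p := by
    rw [Module.finrank_fintype_fun_eq_card]
    have h1 : Fintype.card {t : ZMod p // t ≠ 0} = p - 1 := by
      rw [Fintype.card_subtype_compl]; simp [ZMod.card]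
    rw [Fintype.card_prod, h1, ZMod.card, Nat.sub_mul, one_mul, sq]
  have hrn := L.finrank_range_add_finrank_ker
  have hr : Module.finrank ℝ (LinearMap.range L) ≤ 1 := by
    simpa using Submodule.finrank_le (LinearMap.range L)
  have hker : p ^ 2 - p - 1 ≤ Module.finrank ℝ (LinearMap.ker L) := by omega
  refine hker.trans ?_
  let E : (S → ℝ) →ₗ[ℝ] (Vtx p → ℝ) := Function.ExtendByZero.linearMap ℝ (emb p)
  have hE : ∀ g s, E g (emb p s) = g s := fun g s => (emb_inj p).extend_apply g (0 : Vtx p → ℝ) s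
  have hE' : ∀ g a, a ∉ Set.range (emb p) → E g a = 0 := fun g a ha =>
    Function.extend_apply' g (0 : Vtx p → ℝ) a ha
  have hmem : ∀ g ∈ LinearMap.ker L,
      E g ∈ Module.End.eigenspace (Matrix.toLin' (adjMat p)) (0 : ℝ) := by
    intro g hg
    rw [LinearMap.mem_ker, hL] at hg
    rw [Module.End.mem_eigenspace_iff, zero_smul, Matrix.toLin'_apply]
    funext a
    change ∑ b, adjMat p a b * E g b = 0
    rw [← Fintype.sum_of_injective (emb p) (emb_inj p)
      (fun s => (if a.1.fst.fst = 0 ∧ a.1.fst.snd + a.1.snd.fst = 0 then (1:ℝ) else 0) * g s) _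
      (fun b hb => by rw [hE' g b hb, mul_zero])
      (fun s => by simp only [hE, adjMat, adj_emb p hodd])]
    rw [← Finset.mul_sum, hg, mul_zero]
  refine LinearMap.finrank_le_finrank_of_injective (f := E.restrict hmem) ?_
  intro g g' h
  apply Subtype.ext
  funext s
  have := congrFun (congrArg Subtype.val h) (emb p s)
  change E g.1 (emb p s) = E g'.1 (emb p s) at this
  rwa [hE, hE] at this
end

section
/- The Laplacian spectral radius of Γ(R) equals p³ − 1: every eigenvalue of the Laplacian matrix L(Γ(R)) is at most p³ − 1, and p³ − 1 is an eigenvalue of L(Γ(R)) with multiplicity at least p − 1. -/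
/- `Rng p` models the ring `R = 𝔽_p[u,v]/⟨u², v², uv - vu⟩`:
every element is uniquely `a + b·u + c·v + d·uv` with `a b c d : ZMod p`. -/
set_option synthInstance.maxHeartbeats 1000000
set_option maxHeartbeats 1000000

/-- The Laplacian matrix `L = D - A` of `Γ(R)` over `ℝ`. -/
noncomputable def lapMat (p : ℕ) [Fact p.Prime] : Matrix (Vtx p) (Vtx p) ℝ :=
  Matrix.diagonal (fun a => ((ZDG p).degree a : ℝ)) - adjMat p

theorem lap_eig_le {V : Type*} [Fintype V] [DecidableEq V] (G : SimpleGraph V)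
    [DecidableRel G.Adj] (μ : ℝ)
    (h : Module.End.HasEigenvalue (Matrix.toLin' (G.lapMatrix ℝ)) μ) :
    μ ≤ Fintype.card V := by
  obtain ⟨x, hx⟩ := h.exists_hasEigenvector
  have hne := hx.2
  have he := hx.apply_eq_smul
  rw [Matrix.toLin'_apply] at he
  have hi : ∀ i, ∑ j, (if G.Adj i j then x i - x j else 0) = μ * x i := by
    intro i
    have := congrFun he i
    rw [SimpleGraph.lapMatrix_mulVec_apply] at this
    simp only [Pi.smul_apply, smul_eq_mul] at this
    rw [← this, ← Finset.sum_filter, Finset.sum_sub_distrib, Finset.sum_const,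
      ← SimpleGraph.neighborFinset_eq_filter, SimpleGraph.card_neighborFinset_eq_degree]
    simp
  by_cases h0 : μ ≤ 0
  · exact h0.trans (by positivity)
  push Not at h0
  have hs : ∑ i, x i = 0 := by
    have h1 : μ * ∑ i, x i = 0 := by
      rw [Finset.mul_sum]
      simp_rw [← hi]
      have h2 : ∑ i, ∑ j, (if G.Adj i j then x i - x j else 0)
          = - ∑ i, ∑ j, (if G.Adj i j then x i - x j else 0) := by
        conv_lhs => rw [Finset.sum_comm]
        rw [← Finset.sum_neg_distrib]
        refine Finset.sum_congr rfl fun i _ => ?_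
        rw [← Finset.sum_neg_distrib]
        refine Finset.sum_congr rfl fun j _ => ?_
        simp only [G.adj_comm j i]
        split_ifs <;> ring
      linarith
    exact (mul_eq_zero.1 h1).resolve_left h0.ne'
  have hV : Nonempty V := by
    by_contra hV
    rw [not_nonempty_iff] at hV
    exact hne (Subsingleton.elim _ _)
  obtain ⟨i, hmax⟩ := Finite.exists_max x
  have hpos : 0 < x i := by
    by_contra hc
    push Not at hc
    apply hne
    have h3 : ∀ j ∈ Finset.univ, x j ≤ 0 := fun j _ => (hmax j).trans hc
    have := (Finset.sum_eq_zero_iff_of_nonpos h3).1 hs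
    funext j
    exact this j (Finset.mem_univ j)
  have h4 : ∑ j, (x i - x j) = Fintype.card V * x i := by
    rw [Finset.sum_sub_distrib, hs]; simp
  have h5 : μ * x i ≤ Fintype.card V * x i := by
    rw [← hi, ← h4]
    refine Finset.sum_le_sum fun j _ => ?_
    have := hmax j
    split_ifs <;> linarith
  exact le_of_mul_le_mul_right h5 hpos

theorem lap_dom {V : Type*} [Fintype V] [DecidableEq V] (G : SimpleGraph V)
    [DecidableRel G.Adj] (w : V) (hw : ∀ j, j ≠ w → G.Adj w j) :
    (G.lapMatrix ℝ).mulVec (fun i => (if i = w then (Fintype.card V : ℝ) else 0) - 1)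
      = (Fintype.card V : ℝ) • (fun i => (if i = w then (Fintype.card V : ℝ) else 0) - 1) := by
  funext i
  rw [SimpleGraph.lapMatrix_mulVec_apply]
  simp only [Pi.smul_apply, smul_eq_mul, Finset.sum_sub_distrib, Finset.sum_const,
    SimpleGraph.card_neighborFinset_eq_degree, Finset.sum_ite_eq', SimpleGraph.mem_neighborFinset]
  by_cases h : i = w
  · subst h
    have hd : G.degree i + 1 = Fintype.card V := by
      rw [← SimpleGraph.card_neighborFinset_eq_degree]
      have : G.neighborFinset i = Finset.univ.erase i := by
        ext j
        simp only [SimpleGraph.mem_neighborFinset, Finset.mem_erase, Finset.mem_univ, and_true]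
        exact ⟨fun h => h.ne', hw j⟩
      rw [this, Finset.card_erase_add_one (Finset.mem_univ i), Finset.card_univ]
    rw [← hd]
    simp
    ring
  · simp [h, (hw i h).symm]
    ring

theorem lap_finrank {V ι : Type*} [Fintype V] [DecidableEq V] [Fintype ι] (G : SimpleGraph V)
    [DecidableRel G.Adj] (w : ι → V) (hinj : Function.Injective w)
    (hw : ∀ k j, j ≠ w k → G.Adj (w k) j) (z : V) (hz : ∀ k, w k ≠ z) :
    Fintype.card ι ≤ Module.finrank ℝ
      (Module.End.eigenspace (Matrix.toLin' (G.lapMatrix ℝ)) (Fintype.card V : ℝ)) := by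
  let f : ι → (Module.End.eigenspace (Matrix.toLin' (G.lapMatrix ℝ)) (Fintype.card V : ℝ)) :=
    fun k => ⟨fun i => (if i = w k then (Fintype.card V : ℝ) else 0) - 1, by
      rw [Module.End.mem_eigenspace_iff, Matrix.toLin'_apply]
      exact lap_dom G (w k) (hw k)⟩
  have hli : LinearIndependent ℝ f := by
    rw [Fintype.linearIndependent_iff]
    intro g hg k
    have hg' : ∀ i, ∑ k, g k * ((if i = w k then (Fintype.card V : ℝ) else 0) - 1) = 0 := by
      intro i
      have := congrFun (congrArg Subtype.val hg) i
      simpa [f, Finset.sum_apply] using this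
    have h1 := hg' z
    have h2 := hg' (w k)
    simp only [(hz _).symm, hinj.eq_iff, mul_sub, Finset.sum_sub_distrib, if_false] at h1 h2
    simp at h1
    classical
    simp only [mul_one, h1, hinj.eq_iff, mul_ite, mul_zero, sub_zero, Finset.sum_ite_eq,
      Finset.mem_univ, if_true] at h2
    have : Nonempty V := ⟨z⟩
    simpa using h2
  exact hli.fintype_card_le_finrank

theorem zd_iff (p : ℕ) [Fact p.Prime] (x : Rng p) :
    (∃ y : Rng p, y ≠ 0 ∧ x * y = 0) ↔ x.fst.fst = 0 := by
  constructor
  · rintro ⟨y, hy, hxy⟩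
    by_contra h
    have hu : IsUnit x := by
      rw [TrivSqZeroExt.isUnit_iff_isUnit_fst, TrivSqZeroExt.isUnit_iff_isUnit_fst]
      exact isUnit_iff_ne_zero.2 h
    exact hy ((hu.mul_right_eq_zero).1 hxy)
  · intro h
    refine ⟨TrivSqZeroExt.inr (TrivSqZeroExt.inr 1), ?_, ?_⟩
    · intro h
      have := congrArg (fun y : Rng p => y.snd.snd) h
      simp at this
    · ext <;> simp [h]

theorem card_vtx (p : ℕ) [Fact p.Prime] [Fintype (Vtx p)] :
    Fintype.card (Vtx p) + 1 = p ^ 3 := by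
  classical
  let e : Option (Vtx p) ≃ ZMod p × ZMod p × ZMod p :=
    { toFun := fun o => o.elim 0 (fun x => (x.1.fst.snd, x.1.snd.fst, x.1.snd.snd))
      invFun := fun t => if h : t = 0 then none else
        some ⟨((0, t.1), (t.2.1, t.2.2)), by
          refine ⟨?_, (zd_iff p _).2 rfl⟩
          intro h0
          apply h
          have h1 := congrArg (fun y : Rng p => y.fst.snd) h0
          have h2 := congrArg (fun y : Rng p => y.snd.fst) h0
          have h3 := congrArg (fun y : Rng p => y.snd.snd) h0
          exact Prod.ext h1 (Prod.ext h2 h3)⟩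
      left_inv := by
        rintro (_ | ⟨x, hx, hz⟩)
        · simp
        · have h0 := (zd_iff p x).1 hz
          have hne : ((x.fst.snd, x.snd.fst, x.snd.snd) : ZMod p × ZMod p × ZMod p) ≠ 0 := by
            intro h
            simp only [Prod.mk_eq_zero] at h
            exact hx (by ext <;> simp [h, h0])
          refine (dif_neg hne).trans ?_
          refine congrArg some (Subtype.ext ?_)
          exact Prod.ext (Prod.ext h0.symm rfl) rfl
      right_inv := by
        intro t
        by_cases h : t = 0
        · simp [h]
        · simp only [dif_neg h]
          rfl }
  have := Fintype.card_congr e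
  rw [Fintype.card_option] at this
  rw [this]
  simp [ZMod.card]
  ring

theorem stmt14 (p : ℕ) [Fact p.Prime] (hodd : Odd p) :
    (∀ μ : ℝ, Module.End.HasEigenvalue (Matrix.toLin' (lapMat p)) μ →
        μ ≤ (p : ℝ) ^ 3 - 1) ∧
      p - 1 ≤ Module.finrank ℝ
        (Module.End.eigenspace (Matrix.toLin' (lapMat p)) ((p : ℝ) ^ 3 - 1)) := by
  have hL : lapMat p = (ZDG p).lapMatrix ℝ := by
    unfold lapMat SimpleGraph.lapMatrix SimpleGraph.degMatrix
    congr 1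
  have hc : (p : ℝ) ^ 3 - 1 = Fintype.card (Vtx p) := by
    have := card_vtx p
    have h2 : ((Fintype.card (Vtx p) + 1 : ℕ) : ℝ) = ((p ^ 3 : ℕ) : ℝ) := by rw [this]
    push_cast at h2
    linarith
  rw [hL, hc]
  refine ⟨fun μ h => lap_eig_le _ μ h, ?_⟩
  have hne : ∀ d : (ZMod p)ˣ, (TrivSqZeroExt.inr (TrivSqZeroExt.inr (d : ZMod p)) : Rng p) ≠ 0 := by
    intro d h
    have := congrArg (fun y : Rng p => y.snd.snd) h
    simp at this
  let w : (ZMod p)ˣ → Vtx p := fun d =>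
    ⟨TrivSqZeroExt.inr (TrivSqZeroExt.inr (d : ZMod p)), hne d, (zd_iff p _).2 (by simp)⟩
  have hu : uu p ≠ 0 := by
    intro h
    have := congrArg (fun y : Rng p => y.fst.snd) h
    simp [uu] at this
  have := lap_finrank (ZDG p) w ?_ ?_ ⟨uu p, hu, (zd_iff p _).2 (by simp [uu])⟩ ?_
  · rwa [ZMod.card_units] at this
  · intro d e h
    have := congrArg (fun y : Vtx p => y.1.snd.snd) h
    simp [w] at this
    exact Units.ext this
  · intro d x hx
    refine ⟨hx.symm, ?_⟩
    have h0 := (zd_iff p x.1).1 x.2.2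
    ext <;> simp [w, h0]
  · intro d h
    have := congrArg (fun y : Vtx p => y.1.fst.snd) h
    simp [w, uu] at this
end
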